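/- Fix integers k ≥ 1 and i with 1 ≤ i ≤ k, and let x be a real number with 0 < x < 1/3; set t = (1−x)/(2x). Then the series ∑_{n=1}^{∞} sw_{n,k}(i) xⁿ converges and equals (U_k(t) − U_{k−i}(t) − U_{i−1}(t)) / (2(t−1)·U_k(t)). -/

import Mathlib

/-!
Deleting the first letter of a smooth word of length `n + 2` that starts with `i` leaves a smooth
word of length `n + 1` starting with `i - 1`, `i` or `i + 1`, and this is reversible
(`swF_succ`). With the boundary values `swF n k 0 = swF n k (k + 1) = 0` (`n ≥ 1`), the generating functions
`f i` therefore have to solve `f i = x * (1 + f (i - 1) + f i + f (i + 1))` for `1 ≤ i ≤ k`, together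
with `f 0 = f (k + 1) = 0`. The quotient of Chebyshev values in the theorem, viewed as a function
`gf k t` of an integer `i`, solves exactly this boundary value problem, because both
`U_{k - i}` and `U_{i - 1}` satisfy the Chebyshev recurrence in `i`.

Subtracting the recurrences, the error `e N i` between `gf k t i` and the `N`-th partial sum satisfies
`e (N + 1) i = x * (e N (i - 1) + e N i + e N (i + 1))` and vanishes at `i = 0` and `i = k + 1`, so
it is at most `C * (3 * x) ^ N` (`abs_gf_sub_partial_le`). As `3 * x < 1`, the partial sums converge
to `gf k t i`; no separate summability or uniqueness argument is needed.
-/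

open Real Filter Finset

/-- A word of length `n` over a `k`-letter alphabet (represented as `Fin k`,
a relabeling of `{1,…,k}`) is smooth if adjacent letters differ by at most 1. -/
def IsSmooth {n k : ℕ} (σ : Fin n → Fin k) : Prop :=
  ∀ i : ℕ, ∀ hi : i + 1 < n,
    |((σ ⟨i + 1, hi⟩ : ℕ) : ℤ) - ((σ ⟨i, Nat.lt_of_succ_lt hi⟩ : ℕ) : ℤ)| ≤ 1

/-- A word is smooth cyclic if it is smooth and its last and first letters differ
by at most 1. -/
def IsSmoothCyclic {n k : ℕ} (σ : Fin n → Fin k) : Prop :=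
  IsSmooth σ ∧ ∀ h : 0 < n,
    |((σ ⟨n - 1, Nat.sub_lt h Nat.one_pos⟩ : ℕ) : ℤ) - ((σ ⟨0, h⟩ : ℕ) : ℤ)| ≤ 1

/-- `sw n k` is the number of smooth words of length `n` over a `k`-letter alphabet. -/
noncomputable def sw (n k : ℕ) : ℕ := Nat.card {σ : Fin n → Fin k // IsSmooth σ}

/-- `scw n k` is the number of smooth cyclic words of length `n` over a `k`-letter
alphabet. -/
noncomputable def scw (n k : ℕ) : ℕ := Nat.card {σ : Fin n → Fin k // IsSmoothCyclic σ}

/-- Two words are rotation equivalent if one is a cyclic rotation of the other. -/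
def RotEquiv {n k : ℕ} (σ τ : Fin n → Fin k) : Prop :=
  ∃ r : Fin n, ∀ i : Fin n, σ i = τ (i + r)

/-- `sn n k` is the number of smooth necklaces of length `n` over a `k`-letter
alphabet, i.e. the number of rotation-equivalence classes of smooth cyclic words. -/
noncomputable def sn (n k : ℕ) : ℕ :=
  Nat.card (Quot (fun σ τ : {σ : Fin n → Fin k // IsSmoothCyclic σ} => RotEquiv σ.1 τ.1))

/-- `swF n k i` is the number of smooth words of length `n` over the alphabet
`{1,…,k}` whose first letter is `i` (letters of `Fin k` are `1`-indexed via `+1`). -/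
noncomputable def swF (n k i : ℕ) : ℕ :=
  Nat.card {σ : Fin n → Fin k // IsSmooth σ ∧ ∀ h : 0 < n, (σ ⟨0, h⟩ : ℕ) + 1 = i}

/-- `swFL n k i j` is the number of smooth words of length `n` over the alphabet
`{1,…,k}` with first letter `i` and last letter `j`. -/
noncomputable def swFL (n k i j : ℕ) : ℕ :=
  Nat.card {σ : Fin n → Fin k // IsSmooth σ ∧ ∀ h : 0 < n,
    (σ ⟨0, h⟩ : ℕ) + 1 = i ∧ (σ ⟨n - 1, Nat.sub_lt h Nat.one_pos⟩ : ℕ) + 1 = j}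

/-- Chebyshev polynomial of the second kind, as a real function, with integer index. -/
noncomputable def Ueval (r : ℤ) (t : ℝ) : ℝ := (Polynomial.Chebyshev.U ℝ r).eval t

/-- Smooth words of length `n` over `Fin k` whose first letter, counted from `1`, is `i`. -/
def smoothFrom (n k i : ℕ) : Set (Fin n → Fin k) :=
  {σ | IsSmooth σ ∧ ∀ h : 0 < n, (σ ⟨0, h⟩ : ℕ) + 1 = i}

lemma swF_eq_ncard (n k i : ℕ) : swF n k i = (smoothFrom n k i).ncard := rfl

lemma isSmooth_cons {n k : ℕ} (a : Fin k) (τ : Fin (n + 1) → Fin k) :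
    IsSmooth (Fin.cons a τ : Fin (n + 2) → Fin k) ↔
      |((τ 0 : ℕ) : ℤ) - ((a : ℕ) : ℤ)| ≤ 1 ∧ IsSmooth τ := by
  have hs (m : ℕ) (hm : m < n + 1) :
      (Fin.cons a τ : Fin (n + 2) → Fin k) ⟨m + 1, Nat.succ_lt_succ hm⟩ = τ ⟨m, hm⟩ := rfl
  have hz : (Fin.cons a τ : Fin (n + 2) → Fin k) ⟨0, Nat.succ_pos _⟩ = a := rfl
  constructor
  · intro h
    constructor
    · have h1 := h 0 (by omega)
      rw [hs 0 (by omega), hz] at h1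
      exact h1
    · intro j hj
      have h1 := h (j + 1) (by omega)
      rw [hs (j + 1) hj, hs j (by omega)] at h1
      exact h1
  · rintro ⟨h0, h⟩ j hj
    cases j with
    | zero =>
      rw [hs 0 (by omega), hz]
      exact h0
    | succ j =>
      rw [hs (j + 1) (by omega), hs j (by omega)]
      exact h j (by omega)

/-- Removing the first letter `i` leaves a smooth word whose first letter is a neighbour of `i`. -/
lemma smoothFrom_succ (n k i : ℕ) (hi1 : 1 ≤ i) (hik : i ≤ k) :
    smoothFrom (n + 2) k i = (fun τ => (Fin.cons (⟨i - 1, by omega⟩ : Fin k) τ : Fin (n + 2) → Fin k))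
      '' (smoothFrom (n + 1) k (i - 1) ∪ smoothFrom (n + 1) k i ∪ smoothFrom (n + 1) k (i + 1)) := by
  have key (τ : Fin (n + 1) → Fin k) :
      τ ∈ smoothFrom (n + 1) k (i - 1) ∪ smoothFrom (n + 1) k i ∪ smoothFrom (n + 1) k (i + 1) ↔
        |((τ 0 : ℕ) : ℤ) - ((i - 1 : ℕ) : ℤ)| ≤ 1 ∧ IsSmooth τ := by
    have h0 (j : ℕ) : τ ∈ smoothFrom (n + 1) k j ↔ IsSmooth τ ∧ (τ 0 : ℕ) + 1 = j :=
      and_congr_right fun _ => ⟨fun h => h n.succ_pos, fun h _ => h⟩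
    rw [Set.mem_union, Set.mem_union, h0, h0, h0, abs_le]
    constructor
    · rintro ((⟨h, h'⟩ | ⟨h, h'⟩) | ⟨h, h'⟩) <;> exact ⟨by omega, h⟩
    · rintro ⟨h', h⟩
      simp only [h, true_and]
      omega
  ext σ
  constructor
  · rintro ⟨hσ, h⟩
    have h0 : σ 0 = ⟨i - 1, by omega⟩ := Fin.ext (by have : (σ 0 : ℕ) + 1 = i := h (by omega)
                                                     simp only; omega)
    have hc : Fin.cons (⟨i - 1, by omega⟩ : Fin k) (Fin.tail σ) = σ := by
      rw [← h0, Fin.cons_self_tail]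
    refine ⟨Fin.tail σ, (key _).2 ?_, hc⟩
    rw [← hc, isSmooth_cons] at hσ
    exact hσ
  · rintro ⟨τ, hτ, rfl⟩
    refine ⟨(isSmooth_cons _ _).2 ((key τ).1 hτ), fun _ => ?_⟩
    change i - 1 + 1 = i
    omega

lemma disjoint_smoothFrom (n k : ℕ) {i j : ℕ} (h : i ≠ j) :
    Disjoint (smoothFrom (n + 1) k i) (smoothFrom (n + 1) k j) :=
  Set.disjoint_left.2 fun _ h1 h2 => h ((h1.2 n.succ_pos).symm.trans (h2.2 n.succ_pos))

lemma swF_succ (n k i : ℕ) (hi1 : 1 ≤ i) (hik : i ≤ k) :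
    swF (n + 2) k i = swF (n + 1) k (i - 1) + swF (n + 1) k i + swF (n + 1) k (i + 1) := by
  simp only [swF_eq_ncard]
  rw [smoothFrom_succ n k i hi1 hik, Set.ncard_image_of_injective _ fun _ _ h =>
      (Fin.cons_right_injective (α := fun _ => Fin k) _) h, Set.ncard_union_eq, Set.ncard_union_eq]
  · exact disjoint_smoothFrom _ _ (by omega)
  · exact Set.disjoint_union_left.2
      ⟨disjoint_smoothFrom _ _ (by omega), disjoint_smoothFrom _ _ (by omega)⟩

lemma swF_one (k i : ℕ) (hi1 : 1 ≤ i) (hik : i ≤ k) : swF 1 k i = 1 := by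
  rw [swF_eq_ncard, Set.ncard_eq_one]
  refine ⟨fun _ => ⟨i - 1, by omega⟩, Set.eq_singleton_iff_unique_mem.2 ⟨⟨?_, ?_⟩, ?_⟩⟩
  · intro j hj
    omega
  · intro _
    simp only
    omega
  · rintro σ ⟨-, h⟩
    funext j
    have h0 : (σ 0 : ℕ) + 1 = i := h one_pos
    rw [Subsingleton.elim j 0]
    exact Fin.ext (by simp only; omega)

lemma swF_eq_zero (n k i : ℕ) (hi : i = 0 ∨ k < i) : swF (n + 1) k i = 0 := by
  rw [swF_eq_ncard, Set.ncard_eq_zero, Set.eq_empty_iff_forall_notMem]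
  rintro σ ⟨-, h⟩
  have h0 := h n.succ_pos
  have := (σ ⟨0, n.succ_pos⟩).isLt
  omega

lemma Ueval_add_two (r : ℤ) (t : ℝ) : Ueval (r + 2) t = 2 * t * Ueval (r + 1) t - Ueval r t := by
  simp [Ueval, Polynomial.Chebyshev.U_add_two]

/-- For `t > 1` the values `U_n(t)` are increasing in `n`, hence stay above `U_0(t) = 1`. -/
lemma Ueval_pos {t : ℝ} (ht : 1 < t) (n : ℕ) : 0 < Ueval n t := by
  have h : 0 < Ueval n t ∧ Ueval n t ≤ Ueval ((n : ℤ) + 1) t := by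
    induction n with
    | zero => norm_num [Ueval]; linarith
    | succ n ih =>
      have h2 := Ueval_add_two n t
      push_cast
      rw [add_assoc, one_add_one_eq_two, h2]
      exact ⟨by linarith, by nlinarith⟩
  exact h.1

/-- The closed form for the generating function, with an arbitrary integer in place of the first
letter. -/
noncomputable def gf (k : ℕ) (t : ℝ) (i : ℤ) : ℝ :=
  (Ueval k t - Ueval (k - i) t - Ueval (i - 1) t) / (2 * (t - 1) * Ueval k t)

lemma gf_zero (k : ℕ) (t : ℝ) : gf k t 0 = 0 := by simp [gf, Ueval]

lemma gf_last (k : ℕ) (t : ℝ) : gf k t (k + 1) = 0 := by simp [gf, Ueval]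

lemma gf_rec (k : ℕ) {t x : ℝ} (ht : 1 < t) (hx : x * (2 * t + 1) = 1) (i : ℤ) :
    gf k t i = x * (1 + gf k t (i - 1) + gf k t i + gf k t (i + 1)) := by
  have h1 := Ueval_add_two (k - i - 1) t
  have h2 := Ueval_add_two (i - 2) t
  have hU := (Ueval_pos ht k).ne'
  have ht' : t - 1 ≠ 0 := by linarith
  rw [show (k : ℤ) - i - 1 + 2 = k - (i - 1) by ring, show (k : ℤ) - i - 1 + 1 = k - i by ring,
    show (k : ℤ) - i - 1 = k - (i + 1) by ring] at h1
  rw [show i - 2 + 2 = i + 1 - 1 by ring, show i - 2 + 1 = i - 1 by ring,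
    show i - 2 = i - 1 - 1 by ring] at h2
  have key : 2 * t * gf k t i = 1 + gf k t (i - 1) + gf k t (i + 1) := by
    simp only [gf, h1, h2]
    field_simp
    ring
  linear_combination (-gf k t i) * hx + x * key

/-- The distance from the closed form to the `N`-th partial sum decays like `(3 * x) ^ N`, uniformly
in the first letter; the two boundary positions are included to make the induction close. -/
lemma abs_gf_sub_partial_le (k : ℕ) {t x C : ℝ} (hx0 : 0 < x) (ht : 1 < t)
    (hx : x * (2 * t + 1) = 1) (hC : ∀ i ≤ k + 1, |gf k t (i : ℕ)| ≤ C) (N : ℕ) :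
    ∀ i ≤ k + 1, |gf k t (i : ℕ) - ∑ n ∈ range N, (swF (n + 1) k i : ℝ) * x ^ (n + 1)|
      ≤ C * (3 * x) ^ N := by
  have hC0 : 0 ≤ C := (abs_nonneg _).trans (hC 0 (by omega))
  induction N with
  | zero => simpa using hC
  | succ N ih =>
    intro i hi
    by_cases hb : i = 0 ∨ k < i
    · have hg : gf k t (i : ℕ) = 0 := by
        rcases hb with rfl | h
        · exact gf_zero k t
        · obtain rfl : i = k + 1 := by omega
          exact_mod_cast gf_last k t
      simp only [swF_eq_zero _ _ _ hb, hg]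
      simp
      positivity
    · obtain ⟨j, rfl⟩ : ∃ j, i = j + 1 := ⟨i - 1, by omega⟩
      have hr := gf_rec k ht hx ((j + 1 : ℕ) : ℤ)
      rw [show ((j + 1 : ℕ) : ℤ) - 1 = (j : ℕ) by push_cast; ring,
        show ((j + 1 : ℕ) : ℤ) + 1 = (j + 2 : ℕ) by push_cast; ring] at hr
      have hs : ∑ n ∈ range (N + 1), (swF (n + 1) k (j + 1) : ℝ) * x ^ (n + 1) =
          x * (1 + ∑ n ∈ range N, (swF (n + 1) k j : ℝ) * x ^ (n + 1) +
            ∑ n ∈ range N, (swF (n + 1) k (j + 1) : ℝ) * x ^ (n + 1) +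
            ∑ n ∈ range N, (swF (n + 1) k (j + 2) : ℝ) * x ^ (n + 1)) := by
        rw [sum_range_succ', swF_one k (j + 1) (by omega) (by omega), add_assoc, add_assoc,
          ← sum_add_distrib, ← sum_add_distrib, mul_add, mul_sum, add_comm]
        congr 1
        · simp
        · refine sum_congr rfl fun n _ => ?_
          rw [swF_succ n k (j + 1) (by omega) (by omega)]
          push_cast
          ring
      have h0 := abs_le.1 (ih j (by omega))
      have h1 := abs_le.1 (ih (j + 1) (by omega))
      have h2 := abs_le.1 (ih (j + 2) (by omega))
      rw [hs, hr, ← mul_sub, abs_mul, abs_of_pos hx0,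
        show C * (3 * x) ^ (N + 1) = x * (3 * (C * (3 * x) ^ N)) by ring]
      refine mul_le_mul_of_nonneg_left (abs_le.2 ⟨?_, ?_⟩) hx0.le <;> linarith [h0.1, h0.2]

/-- Equation (7): generating function for the number of smooth words whose first
letter is `i`, summed over lengths `n ≥ 1`. -/
theorem smooth_words_first_letter_gf (k i : ℕ) (hk : 1 ≤ k) (hi1 : 1 ≤ i) (hik : i ≤ k)
    (x : ℝ) (hx0 : 0 < x) (hx3 : x < 1 / 3) :
    HasSum (fun n : ℕ => (swF (n + 1) k i : ℝ) * x ^ (n + 1))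
      ((Ueval (k : ℤ) ((1 - x) / (2 * x)) - Ueval ((k : ℤ) - (i : ℤ)) ((1 - x) / (2 * x)) -
          Ueval ((i : ℤ) - 1) ((1 - x) / (2 * x))) /
        (2 * ((1 - x) / (2 * x) - 1) * Ueval (k : ℤ) ((1 - x) / (2 * x)))) := by
  have ht : 1 < (1 - x) / (2 * x) := by
    rw [lt_div_iff₀ (by positivity)]
    linarith
  have hx : x * (2 * ((1 - x) / (2 * x)) + 1) = 1 := by
    field_simp
    ring
  generalize (1 - x) / (2 * x) = t at ht hx ⊢
  change HasSum _ (gf k t i)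
  rw [hasSum_iff_tendsto_nat_of_nonneg (fun n => by positivity)]
  have hC : ∀ j ≤ k + 1, |gf k t (j : ℕ)| ≤ ∑ j ∈ range (k + 2), |gf k t (j : ℕ)| := fun j hj =>
    single_le_sum (f := fun j : ℕ => |gf k t j|) (fun _ _ => abs_nonneg _)
      (mem_range.2 (by omega))
  refine tendsto_iff_norm_sub_tendsto_zero.2 (squeeze_zero
    (g := fun N => (∑ j ∈ range (k + 2), |gf k t (j : ℕ)|) * (3 * x) ^ N)
    (fun _ => norm_nonneg _) (fun N => ?_) ?_)
  · rw [Real.norm_eq_abs, abs_sub_comm]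
    exact abs_gf_sub_partial_le k hx0 ht hx hC N i (by omega)
  · simpa using (tendsto_pow_atTop_nhds_zero_of_lt_one (by positivity)
      (by linarith : 3 * x < 1)).const_mul _
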